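/- arXiv:1812.00241 — 2 statements merged into one kernel-verified Lean document; each statement's English description precedes it below -/
import Mathlib

section
/- Let S be a set system on [n] = {1,...,n}, let Z ⊆ [n] be a subset, and let k ≥ 1 be an integer. Suppose that for every i ∈ Z there exists a set S ∈ S such that i ∈ S and |Z ∩ S| ≤ k (i.e., every index of Z is 'k-needed' by some set of the system). Then |Z| ≤ k · HHdim(S). -/
/-!
The sets `s ∈ S` with `|Z ∩ s| ≤ k` cover `Z`. Take an inclusion-minimal subfamily `C` that still
covers `Z`. Each member covers at most `k` points, so `|Z| ≤ k * |C|`. By minimality each member of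
`C` has a private point, lying in no other member. The set of chosen private points meets each
`s ∈ C` only in the private point of `s`, so its indicator vector has `|C|` heavy hitters.
-/

/-- The support of a vector `v`: the set of its non-zero coordinates. -/
def vecSupp {α : Type*} (v : α → ℝ) : Set α := {i | v i ≠ 0}

/-- The set of heavy hitters of `v` induced by the set system `S`:
indices `i` such that some member `s ∈ S` satisfies `supp(v) ∩ s = {i}`. -/
def HHset {α : Type*} (S : Set (Set α)) (v : α → ℝ) : Set α :=
  {i | ∃ s ∈ S, vecSupp v ∩ s = {i}}

/-- The heavy-hitter dimension of a set system: the supremum over vectors `v`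
of the number of heavy hitters induced by `S`. -/
noncomputable def HHdim {α : Type*} (S : Set (Set α)) : ℕ :=
  sSup {k | ∃ v : α → ℝ, (HHset S v).ncard = k}

section Covers

variable {α : Type*} {S C : Set (Set α)} {Z s : Set α} {k : ℕ}

/-- A point `z` is private to the member `s` of the family `C` if `s` is the only member of `C`
containing `z`; the notion is meant for `s ∈ C`. Private points witness that no member of a minimal
cover can be omitted. -/
def IsPrivatePoint (C : Set (Set α)) (s : Set α) (z : α) : Prop :=
  ∀ t ∈ C, z ∈ t ↔ t = s

lemma exists_finite_subset_sUnion (hZ : Z.Finite) (hcov : Z ⊆ ⋃₀ S) :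
    ∃ C ⊆ S, C.Finite ∧ Z ⊆ ⋃₀ C := by
  rw [Set.sUnion_eq_iUnion] at hcov
  obtain ⟨I, hI, hZI⟩ := Set.finite_subset_iUnion hZ hcov
  refine ⟨(↑) '' I, Subtype.coe_image_subset S I, hI.image _, ?_⟩
  rwa [Set.sUnion_image]

lemma exists_finite_minimal_cover (hZ : Z.Finite) (hcov : Z ⊆ ⋃₀ S) :
    ∃ C ⊆ S, C.Finite ∧ Minimal (fun D ↦ Z ⊆ ⋃₀ D) C := by
  obtain ⟨C₀, hC₀S, hC₀fin, hC₀cov⟩ := exists_finite_subset_sUnion hZ hcov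
  have hfin : {D | D ⊆ C₀ ∧ Z ⊆ ⋃₀ D}.Finite := hC₀fin.finite_subsets.subset fun _ ↦ And.left
  obtain ⟨C, hC⟩ := hfin.exists_minimal ⟨C₀, subset_rfl, hC₀cov⟩
  obtain ⟨hCC₀, hCcov⟩ := hC.prop
  exact ⟨C, hCC₀.trans hC₀S, hC₀fin.subset hCC₀, hCcov,
    fun D hD hDC ↦ hC.le_of_le ⟨hDC.trans hCC₀, hD⟩ hDC⟩

lemma exists_isPrivatePoint_of_minimal_cover (hC : Minimal (fun D ↦ Z ⊆ ⋃₀ D) C) (hs : s ∈ C) :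
    ∃ z, IsPrivatePoint C s z := by
  have hncov : ¬ Z ⊆ ⋃₀ (C \ {s}) :=
    hC.not_prop_of_ssubset (Set.sdiff_singleton_ssubset.2 hs)
  obtain ⟨z, hzZ, hz⟩ := Set.not_subset.1 hncov
  have huniq : ∀ t ∈ C, z ∈ t → t = s := fun t ht hzt ↦
    by_contra fun hts ↦ hz ⟨t, ⟨ht, hts⟩, hzt⟩
  obtain ⟨t, ht, hzt⟩ := hC.prop hzZ
  obtain rfl := huniq t ht hzt
  exact ⟨z, fun u hu ↦ ⟨huniq u hu, fun h ↦ h ▸ hzt⟩⟩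

lemma ncard_le_mul_ncard_of_subset_sUnion (hC : C.Finite) (hcov : Z ⊆ ⋃₀ C)
    (hk : ∀ s ∈ C, (Z ∩ s).ncard ≤ k) : Z.ncard ≤ k * C.ncard := by
  lift C to Finset (Set α) using hC
  calc Z.ncard = (⋃ s ∈ C, Z ∩ s).ncard := by
        simp only [← Set.inter_iUnion₂, ← Finset.mem_coe, ← Set.sUnion_eq_biUnion,
          Set.inter_eq_left.2 hcov]
    _ ≤ ∑ s ∈ C, (Z ∩ s).ncard := C.set_ncard_biUnion_le _
    _ ≤ C.card * k := Finset.sum_le_card_nsmul C _ k hk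
    _ = k * (C : Set (Set α)).ncard := by rw [Set.ncard_coe_finset, mul_comm]

end Covers

section HeavyHitters

variable {α : Type*} {S C : Set (Set α)} {Z : Set α} {k : ℕ}

lemma vecSupp_indicator_one (W : Set α) : vecSupp (W.indicator 1) = W := by
  ext i
  simp [vecSupp]

lemma HHset_subset_vecSupp (S : Set (Set α)) (v : α → ℝ) : HHset S v ⊆ vecSupp v := by
  rintro i ⟨s, -, hs⟩
  exact Set.inter_subset_left (hs.ge rfl)

lemma exists_ncard_HHset_eq_of_isPrivatePoint (hCS : C ⊆ S)
    (hpriv : ∀ s ∈ C, ∃ z, IsPrivatePoint C s z) : ∃ v, (HHset S v).ncard = C.ncard := by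
  choose z hz using fun s : C ↦ hpriv s s.2
  have hmem (s t : C) : z s ∈ (t : Set α) ↔ t = s := (hz s t t.2).trans Subtype.ext_iff.symm
  have hinj : Function.Injective z := fun s t hst ↦ (hmem t s).1 (hst ▸ (hmem s s).2 rfl)
  have hinter (s : C) : Set.range z ∩ s = {z s} := by
    ext i
    constructor
    · rintro ⟨⟨t, rfl⟩, ht⟩
      exact congrArg z ((hmem t s).1 ht).symm
    · rintro rfl
      exact ⟨⟨s, rfl⟩, (hmem s s).2 rfl⟩
  have hHH : HHset S ((Set.range z).indicator 1) = Set.range z := by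
    apply Set.Subset.antisymm
    · simpa only [vecSupp_indicator_one] using HHset_subset_vecSupp S ((Set.range z).indicator 1)
    · rintro _ ⟨s, rfl⟩
      exact ⟨s, hCS s.2, by rw [vecSupp_indicator_one, hinter]⟩
  refine ⟨(Set.range z).indicator 1, ?_⟩
  rw [hHH, ← Nat.card_coe_set_eq, Nat.card_range_of_injective hinj, Nat.card_coe_set_eq]

lemma exists_ncard_le_mul_ncard_HHset (hZfin : Z.Finite)
    (hZ : ∀ i ∈ Z, ∃ s ∈ S, i ∈ s ∧ (Z ∩ s).ncard ≤ k) :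
    ∃ v, Z.ncard ≤ k * (HHset S v).ncard := by
  have hcov : Z ⊆ ⋃₀ {s ∈ S | (Z ∩ s).ncard ≤ k} := fun i hi ↦
    let ⟨s, hs, his, hsk⟩ := hZ i hi
    ⟨s, ⟨hs, hsk⟩, his⟩
  obtain ⟨C, hCS, hCfin, hCmin⟩ := exists_finite_minimal_cover hZfin hcov
  obtain ⟨v, hv⟩ := exists_ncard_HHset_eq_of_isPrivatePoint (hCS.trans (Set.sep_subset _ _))
    fun s hs ↦ exists_isPrivatePoint_of_minimal_cover hCmin hs
  refine ⟨v, ?_⟩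
  rw [hv]
  exact ncard_le_mul_ncard_of_subset_sUnion hCfin hCmin.prop fun s hs ↦ (hCS hs).2

lemma bddAbove_ncard_HHset [Finite α] (S : Set (Set α)) :
    BddAbove {m | ∃ v : α → ℝ, (HHset S v).ncard = m} := by
  refine ⟨Nat.card α, ?_⟩
  rintro _ ⟨v, rfl⟩
  exact Set.ncard_le_card (HHset S v)

/-- `BddAbove` expresses that the heavy-hitter dimension is finite: `sSup` of an unbounded set of
naturals is the junk value `0`. -/
theorem ncard_le_mul_HHdim_general
    (hS : BddAbove {m | ∃ v : α → ℝ, (HHset S v).ncard = m}) (hZfin : Z.Finite)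
    (hZ : ∀ i ∈ Z, ∃ s ∈ S, i ∈ s ∧ (Z ∩ s).ncard ≤ k) :
    Z.ncard ≤ k * HHdim S := by
  obtain ⟨v, hv⟩ := exists_ncard_le_mul_ncard_HHset hZfin hZ
  exact hv.trans (Nat.mul_le_mul_left k (le_csSup hS ⟨v, rfl⟩))

end HeavyHitters

/-- If every index `i ∈ Z` is `k`-needed by some set of the system
(i.e. there is `s ∈ S` with `i ∈ s` and `|Z ∩ s| ≤ k`), then `|Z| ≤ k · HHdim(S)`. -/
theorem ncard_le_mul_HHdim {n k : ℕ} (hk : 1 ≤ k)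
    (S : Set (Set (Fin n))) (Z : Set (Fin n))
    (hZ : ∀ i ∈ Z, ∃ s ∈ S, i ∈ s ∧ (Z ∩ s).ncard ≤ k) :
    Z.ncard ≤ k * HHdim S :=
  ncard_le_mul_HHdim_general (bddAbove_ncard_HHset S) Z.toFinite hZ
end

section
/- For any two non-empty set systems S₁, S₂ ⊆ 2^[n], the union-product system satisfies HHdim({ S₁ ∪ S₂ : S₁ ∈ S₁, S₂ ∈ S₂ }) ≤ HHdim(S₁) + HHdim(S₂). -/
theorem supIrred_of_isAtom {β : Type*} [SemilatticeSup β] [OrderBot β] {x : β} (hx : IsAtom x) :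
    SupIrred x := by
  refine ⟨fun hmin ↦ hx.ne_bot hmin.eq_bot, fun b c hbc ↦ ?_⟩
  have hb : b = ⊥ ∨ b = x := hx.le_iff.1 (hbc ▸ le_sup_left)
  exact hb.symm.imp_right fun hb ↦ by rwa [hb, bot_sup_eq] at hbc

section

variable {α : Type*}

theorem HHset_image2_union_subset (S₁ S₂ : Set (Set α)) (v : α → ℝ) :
    HHset (Set.image2 (· ∪ ·) S₁ S₂) v ⊆ HHset S₁ v ∪ HHset S₂ v := by
  rintro i ⟨_, ⟨s, hs, t, ht, rfl⟩, hst⟩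
  have union_eq : (vecSupp v ∩ s) ∪ (vecSupp v ∩ t) = {i} := by
    rw [← Set.inter_union_distrib_left, hst]
  have isolated : vecSupp v ∩ s = {i} ∨ vecSupp v ∩ t = {i} :=
    (supIrred_of_isAtom (Set.isAtom_singleton i)).2 union_eq
  exact isolated.imp (fun his ↦ ⟨s, hs, his⟩) (fun hit ↦ ⟨t, ht, hit⟩)

theorem HHdim_le {S : Set (Set α)} {d : ℕ} (h : ∀ v : α → ℝ, (HHset S v).ncard ≤ d) :
    HHdim S ≤ d :=
  csSup_le' (Set.forall_mem_range.2 h)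

theorem ncard_HHset_le_HHdim [Finite α] (S : Set (Set α)) (v : α → ℝ) :
    (HHset S v).ncard ≤ HHdim S := by
  have bddAbove_ncard : BddAbove (Set.range fun w : α → ℝ ↦ (HHset S w).ncard) :=
    ⟨Nat.card α, Set.forall_mem_range.2 fun w ↦ Set.ncard_le_card (HHset S w)⟩
  exact le_csSup bddAbove_ncard ⟨v, rfl⟩

theorem HHdim_union_product_le_general [Finite α] (S₁ S₂ : Set (Set α)) :
    HHdim (Set.image2 (· ∪ ·) S₁ S₂) ≤ HHdim S₁ + HHdim S₂ :=
  HHdim_le fun v ↦ calc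
    (HHset (Set.image2 (· ∪ ·) S₁ S₂) v).ncard
      ≤ (HHset S₁ v ∪ HHset S₂ v).ncard := Set.ncard_le_ncard (HHset_image2_union_subset S₁ S₂ v)
    _ ≤ (HHset S₁ v).ncard + (HHset S₂ v).ncard := Set.ncard_union_le _ _
    _ ≤ HHdim S₁ + HHdim S₂ :=
      add_le_add (ncard_HHset_le_HHdim S₁ v) (ncard_HHset_le_HHdim S₂ v)

end

/-- For non-empty set systems `S₁, S₂`, the union-product system
`{ s₁ ∪ s₂ : s₁ ∈ S₁, s₂ ∈ S₂ }` satisfies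
`HHdim ≤ HHdim(S₁) + HHdim(S₂)`. -/
theorem HHdim_union_product_le {n : ℕ} (S₁ S₂ : Set (Set (Fin n)))
    (h₁ : S₁.Nonempty) (h₂ : S₂.Nonempty) :
    HHdim (Set.image2 (· ∪ ·) S₁ S₂) ≤ HHdim S₁ + HHdim S₂ :=
  HHdim_union_product_le_general S₁ S₂
end
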